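/- For positive integers b and c, the symmetrical antitree AT(1,b,c,b,1) (which has diameter 4) is Bonnet-Myers sharp if and only if c=b+2. -/

import Mathlib

open scoped Classical
open Finset

noncomputable section

/-- The degree of a vertex `x` in the graph `G`. -/
def deg {V : Type*} [Fintype V] (G : SimpleGraph V) (x : V) : ℕ :=
  (Finset.univ.filter (fun y => G.Adj x y)).card

/-- The diameter of `G`: the maximum of the combinatorial distance over all pairs of vertices. -/
def diam {V : Type*} [Fintype V] (G : SimpleGraph V) : ℕ :=
  Finset.univ.sup (fun xy : V × V => G.dist xy.1 xy.2)

/-- The probability measure `μ_x^p` of the lazy simple random walk at `x` with idleness `p`. -/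
def mu {V : Type*} [Fintype V] (G : SimpleGraph V) (p : ℝ) (x : V) : V → ℝ :=
  fun z => if z = x then p else if G.Adj x z then (1 - p) / (deg G x : ℝ) else 0

/-- The Wasserstein distance `W₁(μ₁, μ₂)` with respect to the combinatorial distance of `G`:
the infimum of the total transport cost over all transport plans from `μ₁` to `μ₂`. -/
def W1 {V : Type*} [Fintype V] (G : SimpleGraph V) (μ₁ μ₂ : V → ℝ) : ℝ :=
  sInf {c : ℝ | ∃ π : V → V → ℝ,
    (∀ x y, 0 ≤ π x y ∧ π x y ≤ 1) ∧
    (∀ x, ∑ y, π x y = μ₁ x) ∧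
    (∀ y, ∑ x, π x y = μ₂ y) ∧
    c = ∑ x, ∑ y, (G.dist x y : ℝ) * π x y}

/-- The `p`-Ollivier-Ricci curvature `κ_p(x,y) = 1 - W₁(μ_x^p, μ_y^p)`. -/
def kappa {V : Type*} [Fintype V] (G : SimpleGraph V) (p : ℝ) (x y : V) : ℝ :=
  1 - W1 G (mu G p x) (mu G p y)

/-- The Lin-Lu-Yau curvature `κ_LLY(x,y) = lim_{p→1} κ_p(x,y)/(1-p)`. -/
def kappaLLY {V : Type*} [Fintype V] (G : SimpleGraph V) (x y : V) : ℝ :=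
  Filter.limUnder (nhdsWithin 1 (Set.Iio 1)) (fun p => kappa G p x y / (1 - p))

/-- `G` is Bonnet-Myers sharp if the infimum of `κ_LLY` over the edges equals `2/diam(G)`. -/
def BMSharp {V : Type*} [Fintype V] (G : SimpleGraph V) : Prop :=
  sInf {r : ℝ | ∃ x y, G.Adj x y ∧ r = kappaLLY G x y} = 2 / (diam G : ℝ)

/-- `G` is obtained from the complete graph on its vertex set by deleting a matching
(a set of pairwise disjoint edges, encoded as a symmetric irreflexive relation in which
every vertex has at most one partner). -/
def IsMatchingDeletionOfComplete {V : Type*} (G : SimpleGraph V) : Prop :=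
  ∃ M : V → V → Prop, Symmetric M ∧ (∀ x, ¬ M x x) ∧
    (∀ x y z, M x y → M x z → y = z) ∧
    (∀ x y, G.Adj x y ↔ x ≠ y ∧ ¬ M x y)

/-- The graph `G(a,b)` on `2a+b` vertices `u_1, …, u_{2a}, v_1, …, v_b` (encoded as
`Fin (2a+b)`, with `u_i` the index `i-1` and `v_j` the index `2a+j-1`), in which two distinct
vertices are adjacent unless they form a pair `{u_{2i-1}, u_{2i}}`, i.e. `G(a,b)` is the
complete graph `K_{2a+b}` with a matching of size `a` deleted. -/
def Gab (a b : ℕ) : SimpleGraph (Fin (2*a+b)) where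
  Adj x y := x ≠ y ∧ ¬((x : ℕ) < 2*a ∧ (y : ℕ) < 2*a ∧ (x : ℕ)/2 = (y : ℕ)/2)
  symm := by
    constructor
    intro x y h
    exact ⟨h.1.symm, fun hc => h.2 ⟨hc.2.1, hc.1, hc.2.2.symm⟩⟩
  loopless := by constructor; intro x h; exact h.1 rfl

/-- The antitree `AT(a_1, …, a_N)` on the disjoint union of sets `V_1, …, V_N` with
`|V_k| = a_k` (0-indexed here: `V_k` is `Fin (a k)` for `k : Fin N`): two distinct vertices
are adjacent iff they lie in the same set or in consecutive sets. -/
def antitree (N : ℕ) (a : Fin N → ℕ) : SimpleGraph (Σ k : Fin N, Fin (a k)) where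
  Adj x y := x ≠ y ∧
    ((x.1 : ℕ) = (y.1 : ℕ) ∨ (x.1 : ℕ) + 1 = (y.1 : ℕ) ∨ (y.1 : ℕ) + 1 = (x.1 : ℕ))
  symm := by
    constructor
    intro x y h
    refine ⟨h.1.symm, ?_⟩
    rcases h.2 with h2 | h2 | h2
    · exact Or.inl h2.symm
    · exact Or.inr (Or.inr h2)
    · exact Or.inr (Or.inl h2)
  loopless := by constructor; intro x h; exact h.1 rfl

/-!
By Kantorovich duality, a `1`-Lipschitz potential `f` and a coupling that moves mass only between
points where `f` realises the distance certify each other. If such a pair exists for an edge `xy`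
with `f y - f x = 1` at one idleness `p < 1`, then scaling the coupling and moving the remaining
mass from `x` to `y` yields one for every larger idleness, so `κ_LLY(x, y) = Δf(x) - Δf(y)`.

For an edge between consecutive levels of an antitree, the level itself is an optimal potential,
while an edge inside a level joins vertices with the same closed neighbourhood and therefore has
curvature at least `1`. In `AT(1,b,c,b,1)` the Laplacian of the level is `1, t, 0, -t, -1` on the
five levels, where `t = (c - 1) / (b + c)`. Hence the infimum of the curvature is `min (1 - t) t`,
which equals `2 / 4` exactly when `t = 1 / 2`, that is, when `c = b + 2`.
-/

section Transport

variable {V : Type*} [Fintype V] {G : SimpleGraph V} {μ ν μ' ν' f : V → ℝ} {π π' : V → V → ℝ}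

/-- A transport plan from `μ` to `ν`. The bound `π u v ≤ 1` in the definition of `W1` is left out,
since it holds automatically between probability measures. -/
structure IsCoupling (μ ν : V → ℝ) (π : V → V → ℝ) : Prop where
  nonneg : ∀ u v, 0 ≤ π u v
  sum_right : ∀ u, ∑ v, π u v = μ u
  sum_left : ∀ v, ∑ u, π u v = ν v

namespace IsCoupling

lemma le_one (hπ : IsCoupling μ ν π) (hμ : μ ∈ stdSimplex ℝ V) (u v : V) : π u v ≤ 1 :=
  calc π u v ≤ ∑ v, π u v := single_le_sum (fun v _ => hπ.nonneg u v) (mem_univ v)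
    _ = μ u := hπ.sum_right u
    _ ≤ ∑ u, μ u := single_le_sum (fun u _ => hμ.1 u) (mem_univ u)
    _ = 1 := hμ.2

lemma prod (hμ : μ ∈ stdSimplex ℝ V) (hν : ν ∈ stdSimplex ℝ V) :
    IsCoupling μ ν (fun u v => μ u * ν v) where
  nonneg u v := mul_nonneg (hμ.1 u) (hν.1 v)
  sum_right u := by rw [← mul_sum, hν.2, mul_one]
  sum_left v := by rw [← sum_mul, hμ.2, one_mul]

lemma convexComb {s t : ℝ} (hs : 0 ≤ s) (ht : 0 ≤ t) (hπ : IsCoupling μ ν π)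
    (hπ' : IsCoupling μ' ν' π') :
    IsCoupling (s • μ + t • μ') (s • ν + t • ν') (s • π + t • π') where
  nonneg u v := add_nonneg (mul_nonneg hs (hπ.nonneg u v)) (mul_nonneg ht (hπ'.nonneg u v))
  sum_right u := by simp [sum_add_distrib, ← mul_sum, hπ.sum_right, hπ'.sum_right]
  sum_left v := by simp [sum_add_distrib, ← mul_sum, hπ.sum_left, hπ'.sum_left]

lemma sum_sub_mul (hπ : IsCoupling μ ν π) (f : V → ℝ) :
    ∑ u, ∑ v, (f v - f u) * π u v = ∑ v, f v * ν v - ∑ u, f u * μ u := by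
  have hν : ∑ u, ∑ v, f v * π u v = ∑ v, f v * ν v := by
    rw [sum_comm]
    simp only [← mul_sum, hπ.sum_left]
  have hμ : ∑ u, ∑ v, f u * π u v = ∑ u, f u * μ u := by
    simp only [← mul_sum, hπ.sum_right]
  simp only [sub_mul, sum_sub_distrib, hν, hμ]

end IsCoupling

lemma W1_comm (μ ν : V → ℝ) : W1 G μ ν = W1 G ν μ := by
  unfold W1
  congr 1
  ext c
  constructor <;>
  · rintro ⟨π, hπ, hleft, hright, rfl⟩
    refine ⟨fun u v => π v u, fun u v => hπ v u, hright, hleft, ?_⟩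
    rw [sum_comm]
    simp only [G.dist_comm]

/-- Complementary slackness in Kantorovich duality: a coupling supported where the potential `f`
realises the distance is optimal. -/
lemma W1_eq_of_coupling (hμ : μ ∈ stdSimplex ℝ V) (hf : ∀ u v, f v - f u ≤ G.dist u v)
    (hπ : IsCoupling μ ν π) (htight : ∀ u v, π u v ≠ 0 → G.dist u v ≤ f v - f u) :
    W1 G μ ν = ∑ v, f v * ν v - ∑ u, f u * μ u := by
  refine IsLeast.csInf_eq ⟨⟨π, fun u v => ⟨hπ.nonneg u v, hπ.le_one hμ u v⟩, hπ.sum_right,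
    hπ.sum_left, ?_⟩, ?_⟩
  · rw [← hπ.sum_sub_mul]
    refine sum_congr rfl fun u _ => sum_congr rfl fun v _ => ?_
    by_cases huv : π u v = 0
    · simp only [huv, mul_zero]
    · rw [(hf u v).antisymm (htight u v huv)]
  · rintro _ ⟨ρ, hρ, hρμ, hρν, rfl⟩
    rw [← IsCoupling.sum_sub_mul ⟨fun u v => (hρ u v).1, hρμ, hρν⟩]
    exact sum_le_sum fun u _ => sum_le_sum fun v _ =>
      mul_le_mul_of_nonneg_right (hf u v) (hρ u v).1

/-- The coupling that leaves the common mass `min μ ν` in place and distributes the excess of `μ`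
over `ν` proportionally to the excess of `ν` over `μ`. If `μ = ν` then the denominator vanishes,
and the junk value `0` of the quotient is the intended one. -/
def excessCoupling (μ ν : V → ℝ) (u v : V) : ℝ :=
  (if u = v then min (μ u) (ν u) else 0) +
    (μ u - min (μ u) (ν u)) * (ν v - min (μ v) (ν v)) / ∑ w, (μ w - min (μ w) (ν w))

lemma sum_sub_min (hμν : ∑ w, μ w = ∑ w, ν w) :
    ∑ w, (μ w - min (μ w) (ν w)) = ∑ w, (ν w - min (μ w) (ν w)) := by
  rw [sum_sub_distrib, sum_sub_distrib, hμν]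

lemma sub_min_eq_zero_of_sum_eq_zero (h : ∑ w, (μ w - min (μ w) (ν w)) = 0) (u : V) :
    μ u - min (μ u) (ν u) = 0 :=
  (sum_eq_zero_iff_of_nonneg fun w _ => sub_nonneg.2 (min_le_left (μ w) (ν w))).1 h u (mem_univ u)

lemma isCoupling_excessCoupling (hμ : ∀ u, 0 ≤ μ u) (hν : ∀ u, 0 ≤ ν u)
    (hμν : ∑ w, μ w = ∑ w, ν w) : IsCoupling μ ν (excessCoupling μ ν) where
  nonneg u v := by
    have hsum : 0 ≤ ∑ w, (μ w - min (μ w) (ν w)) :=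
      sum_nonneg fun w _ => sub_nonneg.2 (min_le_left _ _)
    refine add_nonneg ?_ (div_nonneg (mul_nonneg (sub_nonneg.2 (min_le_left _ _))
      (sub_nonneg.2 (min_le_right _ _))) hsum)
    split_ifs
    exacts [le_min (hμ u) (hν u), le_rfl]
  sum_right u := by
    simp only [excessCoupling, sum_add_distrib, sum_ite_eq, mem_univ, if_true, ← sum_div,
      ← mul_sum]
    rw [← sum_sub_min hμν, mul_div_cancel_of_imp fun h => sub_min_eq_zero_of_sum_eq_zero h u,
      add_sub_cancel]
  sum_left v := by
    simp only [excessCoupling, sum_add_distrib, sum_ite_eq', mem_univ, if_true, ← sum_div,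
      ← sum_mul]
    rw [mul_div_cancel_left_of_imp, add_sub_cancel]
    intro h
    rw [sum_sub_min hμν] at h
    simp only [min_comm (μ _)] at h ⊢
    exact sub_min_eq_zero_of_sum_eq_zero h v

lemma eq_or_lt_of_excessCoupling_ne_zero {u v : V} (h : excessCoupling μ ν u v ≠ 0) :
    u = v ∨ ν u < μ u ∧ μ v < ν v := by
  contrapose! h
  obtain ⟨huv, hlt⟩ := h
  rcases le_or_gt (μ u) (ν u) with hu | hu
  · simp [excessCoupling, huv, min_eq_left hu]
  · simp [excessCoupling, huv, min_eq_right (hlt hu)]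

end Transport

/-- The closed neighbourhood of `x`, which carries the measures `μ_x^p`. -/
def closedNeighborSet {V : Type*} (G : SimpleGraph V) (x : V) : Set V :=
  insert x (G.neighborSet x)

lemma sub_le_dist_of_adj {V : Type*} {G : SimpleGraph V} {f : V → ℝ} (hG : G.Connected)
    (hf : ∀ u v, G.Adj u v → f v - f u ≤ 1) (u v : V) :
    f v - f u ≤ G.dist u v := by
  obtain ⟨w, hw⟩ := hG.exists_walk_length_eq_dist u v
  rw [← hw]
  clear hw
  induction w with
  | nil => simp
  | cons h w ih =>
    rw [SimpleGraph.Walk.length_cons, Nat.cast_succ]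
    linarith [hf _ _ h]

section Curvature

variable {V : Type*} [Fintype V] {G : SimpleGraph V} {f : V → ℝ} {x y : V} {p : ℝ}

/-- The normalised graph Laplacian `Δf(x) = (1 / d_x) ∑_{z ∼ x} (f z - f x)`. -/
def lap (G : SimpleGraph V) (f : V → ℝ) (x : V) : ℝ :=
  (∑ z with G.Adj x z, (f z - f x)) / deg G x

lemma lap_neg (f : V → ℝ) (x : V) : lap G (-f) x = -lap G f x := by
  simp only [lap, Pi.neg_apply, neg_sub_neg, ← neg_div, ← sum_neg_distrib, neg_sub]

lemma deg_pos_of_adj (h : G.Adj x y) : 0 < deg G x :=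
  card_pos.2 ⟨y, by simpa using h⟩

lemma sum_sub_mul_mu (p : ℝ) (f : V → ℝ) (x : V) :
    ∑ z, (f z - f x) * mu G p x z = (1 - p) * lap G f x := by
  have hterm (z : V) : (f z - f x) * mu G p x z =
      if G.Adj x z then (1 - p) / deg G x * (f z - f x) else 0 := by
    rcases eq_or_ne z x with rfl | hz
    · simp
    · simp [mu, hz, mul_comm]
  rw [sum_congr rfl fun z _ => hterm z, ← sum_filter, ← mul_sum, lap]
  ring

lemma sum_mu (p : ℝ) (hx : 0 < deg G x) : ∑ z, mu G p x z = 1 := by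
  have hterm (z : V) : mu G p x z =
      (if z = x then p else 0) + if G.Adj x z then (1 - p) / deg G x else 0 := by
    rcases eq_or_ne z x with rfl | hz
    · simp [mu]
    · simp [mu, hz]
  have hdeg : (#{z | G.Adj x z} : ℝ) = deg G x := rfl
  have hx' : (deg G x : ℝ) ≠ 0 := by positivity
  rw [sum_congr rfl fun z _ => hterm z, sum_add_distrib, ← sum_filter (G.Adj x), sum_const,
    nsmul_eq_mul, hdeg, mul_div_cancel₀ _ hx', sum_ite_eq', if_pos (mem_univ x)]
  ring

lemma mu_mem_stdSimplex (hp : p ∈ Set.Icc 0 1) (hx : 0 < deg G x) :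
    mu G p x ∈ stdSimplex ℝ V := by
  refine ⟨fun z => ?_, sum_mu p hx⟩
  unfold mu
  split_ifs
  exacts [hp.1, div_nonneg (sub_nonneg.2 hp.2) (Nat.cast_nonneg _), le_rfl]

lemma sum_mul_mu (p : ℝ) (f : V → ℝ) (hx : 0 < deg G x) :
    ∑ z, f z * mu G p x z = f x + (1 - p) * lap G f x := by
  rw [← sum_sub_mul_mu]
  simp only [sub_mul, sum_sub_distrib, ← mul_sum, sum_mu p hx]
  ring

lemma mu_one_sub_mul (p t : ℝ) (x : V) :
    mu G (1 - t * (1 - p)) x = t • mu G p x + (1 - t) • Pi.single x 1 := by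
  ext z
  rcases eq_or_ne z x with rfl | hz
  · simp only [mu, if_true, Pi.add_apply, Pi.smul_apply, Pi.single_eq_same, smul_eq_mul]
    ring
  · simp only [mu, hz, if_false, Pi.add_apply, Pi.smul_apply, Pi.single_eq_of_ne hz, smul_eq_mul]
    split_ifs <;> ring

lemma kappa_eq_of_coupling {π : V → V → ℝ} (h : G.Adj x y) (hp : p ∈ Set.Icc 0 1)
    (hf : ∀ u v, f v - f u ≤ G.dist u v) (hfxy : f y - f x = 1)
    (hπ : IsCoupling (mu G p x) (mu G p y) π)
    (htight : ∀ u v, π u v ≠ 0 → G.dist u v ≤ f v - f u) :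
    kappa G p x y = (1 - p) * (lap G f x - lap G f y) := by
  rw [kappa, W1_eq_of_coupling (mu_mem_stdSimplex hp (deg_pos_of_adj h)) hf hπ htight,
    sum_mul_mu p f (deg_pos_of_adj h), sum_mul_mu p f (deg_pos_of_adj h.symm)]
  linear_combination -hfxy

/-- For `q = 1 - t (1 - p) ≥ p`, an optimal coupling at idleness `q` is obtained from one at `p` by
scaling it with `t` and moving the remaining mass `1 - t` from `x` to `y`. -/
lemma kappa_eq_of_coupling_of_le {π : V → V → ℝ} {q : ℝ} (h : G.Adj x y) (hp : 0 ≤ p)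
    (hpq : p ≤ q) (hq : q < 1) (hf : ∀ u v, f v - f u ≤ G.dist u v) (hfxy : f y - f x = 1)
    (hπ : IsCoupling (mu G p x) (mu G p y) π)
    (htight : ∀ u v, π u v ≠ 0 → G.dist u v ≤ f v - f u) :
    kappa G q x y = (1 - q) * (lap G f x - lap G f y) := by
  obtain ⟨t, ht0, ht1, rfl⟩ : ∃ t, 0 ≤ t ∧ 0 ≤ 1 - t ∧ q = 1 - t * (1 - p) := by
    have hp1 : 0 < 1 - p := by linarith
    refine ⟨(1 - q) / (1 - p), div_nonneg (by linarith) hp1.le, ?_, ?_⟩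
    · rw [sub_nonneg, div_le_one hp1]
      linarith
    · rw [div_mul_cancel₀ _ hp1.ne', sub_sub_cancel]
  have hπ_t := hπ.convexComb ht0 ht1
    (IsCoupling.prod (single_mem_stdSimplex ℝ x) (single_mem_stdSimplex ℝ y))
  rw [← mu_one_sub_mul, ← mu_one_sub_mul] at hπ_t
  refine kappa_eq_of_coupling h ⟨hp.trans hpq, hq.le⟩ hf hfxy hπ_t fun u v huv => ?_
  by_cases hxy : u = x ∧ v = y
  · rw [hxy.1, hxy.2, SimpleGraph.dist_eq_one_iff_adj.2 h, hfxy, Nat.cast_one]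
  · refine htight u v fun hzero => huv ?_
    have hsingle : (Pi.single x 1 : V → ℝ) u * (Pi.single y 1 : V → ℝ) v = 0 := by
      rcases not_and_or.1 hxy with hu | hv
      · rw [Pi.single_eq_of_ne hu, zero_mul]
      · rw [Pi.single_eq_of_ne hv, mul_zero]
    simp [hzero, hsingle]

lemma kappaLLY_eq_of_coupling {π : V → V → ℝ} (h : G.Adj x y) (hp : 0 ≤ p) (hp1 : p < 1)
    (hf : ∀ u v, f v - f u ≤ G.dist u v) (hfxy : f y - f x = 1)
    (hπ : IsCoupling (mu G p x) (mu G p y) π)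
    (htight : ∀ u v, π u v ≠ 0 → G.dist u v ≤ f v - f u) :
    kappaLLY G x y = lap G f x - lap G f y := by
  refine (tendsto_const_nhds.congr' ?_).limUnder_eq
  filter_upwards [Ico_mem_nhdsLT hp1] with q hq
  rw [kappa_eq_of_coupling_of_le h hp hq.1 hq.2 hf hfxy hπ htight,
    mul_div_cancel_left₀ _ (sub_pos.2 hq.2).ne']

lemma kappaLLY_comm (x y : V) : kappaLLY G x y = kappaLLY G y x := by
  simp only [kappaLLY, kappa, W1_comm (mu G _ x) (mu G _ y)]

lemma mu_eq_zero_of_notMem {z : V} (hz : z ∉ closedNeighborSet G x) : mu G p x z = 0 := by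
  obtain ⟨hzx, hadj⟩ := not_or.1 hz
  rw [SimpleGraph.mem_neighborSet] at hadj
  rw [mu, if_neg hzx, if_neg hadj]

lemma mu_le_one_div (x z : V) : mu G (1 / (deg G x + 1)) x z ≤ 1 / (deg G x + 1) := by
  have hnonneg : (0 : ℝ) ≤ 1 / (deg G x + 1) := by positivity
  unfold mu
  split_ifs with _ hadj
  · exact le_rfl
  · have hx : (deg G x : ℝ) ≠ 0 := Nat.cast_ne_zero.2 (deg_pos_of_adj hadj).ne'
    refine le_of_eq ?_
    field_simp
    ring
  · exact hnonneg

lemma one_div_le_mu {d : ℕ} (hd : deg G x ≤ d) {z : V} (hz : z ∈ closedNeighborSet G x) :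
    1 / ((d : ℝ) + 1) ≤ mu G (1 / (d + 1)) x z := by
  unfold mu
  split_ifs with hzx hadj
  · exact le_rfl
  · have hx : (0 : ℝ) < deg G x := Nat.cast_pos.2 (deg_pos_of_adj hadj)
    have hd' : (deg G x : ℝ) ≤ d := Nat.cast_le.2 hd
    have hmass : (1 : ℝ) - 1 / (d + 1) = d / (d + 1) := by field_simp; ring
    rw [hmass, le_div_iff₀ hx, one_div_mul_eq_div]
    gcongr
  · exact (hz.elim hzx hadj).elim

/-- At idleness `1 / (d_y + 1)` the measure at `y` is uniform on the closed neighbourhood of `y`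
and, as `d_x ≤ d_y`, the measure at `x` is at least as large on that of `x`. Hence only mass
arriving outside the closed neighbourhood of `x` has to be transported. -/
theorem kappaLLY_eq_lap_sub_lap_of_deg_le (h : G.Adj x y) (hdeg : deg G x ≤ deg G y)
    (hf : ∀ u v, f v - f u ≤ G.dist u v) (hfxy : f y - f x = 1)
    (hdist : ∀ u ∈ closedNeighborSet G x, ∀ v ∈ closedNeighborSet G y \ closedNeighborSet G x,
      G.dist u v ≤ f v - f u) :
    kappaLLY G x y = lap G f x - lap G f y := by
  set p : ℝ := 1 / (deg G y + 1) with hp_def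
  have hy : (0 : ℝ) < deg G y := Nat.cast_pos.2 (deg_pos_of_adj h.symm)
  have hp0 : 0 ≤ p := by positivity
  have hp1 : p < 1 := by
    rw [hp_def, div_lt_one (by positivity)]
    linarith
  have hμx := mu_mem_stdSimplex ⟨hp0, hp1.le⟩ (deg_pos_of_adj h)
  have hμy := mu_mem_stdSimplex ⟨hp0, hp1.le⟩ (deg_pos_of_adj h.symm)
  refine kappaLLY_eq_of_coupling h hp0 hp1 hf hfxy
    (isCoupling_excessCoupling hμx.1 hμy.1 (hμx.2.trans hμy.2.symm)) fun u v huv => ?_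
  obtain rfl | ⟨hu, hv⟩ := eq_or_lt_of_excessCoupling_ne_zero huv
  · simp
  have hux : u ∈ closedNeighborSet G x := by
    by_contra hmem
    exact ((hμy.1 u).trans_lt hu).ne' (mu_eq_zero_of_notMem hmem)
  have hvy : v ∈ closedNeighborSet G y := by
    by_contra hmem
    exact ((hμx.1 v).trans_lt hv).ne' (mu_eq_zero_of_notMem hmem)
  have hvx : v ∉ closedNeighborSet G x := fun hmem =>
    (hv.trans_le (mu_le_one_div y v)).not_ge (one_div_le_mu hdeg hmem)
  exact hdist u hux v ⟨hvy, hvx⟩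

lemma ncard_closedNeighborSet (x : V) : (closedNeighborSet G x).ncard = deg G x + 1 := by
  rw [closedNeighborSet, Set.ncard_insert_of_notMem (G.notMem_neighborSet_self),
    Set.ncard_eq_toFinset_card', deg]
  congr 2
  ext z
  simp

lemma lap_single_of_adj (h : G.Adj x y) : lap G (Pi.single y 1) x = 1 / deg G x := by
  simp [lap, Pi.single_apply, h.ne, h]

lemma lap_single_self (hy : 0 < deg G y) : lap G (Pi.single y 1) y = -1 := by
  have hterm : ∀ z ∈ ({z | G.Adj y z} : Finset V),
      (Pi.single y 1 : V → ℝ) z - (Pi.single y 1 : V → ℝ) y = -1 := by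
    intro z hz
    have hadj : G.Adj y z := by simpa using hz
    simp [hadj.ne']
  have hdeg : (#{z | G.Adj y z} : ℝ) = deg G y := rfl
  have hy' : (deg G y : ℝ) ≠ 0 := by positivity
  rw [lap, sum_congr rfl hterm, sum_const, nsmul_eq_mul, hdeg, mul_div_cancel_left₀ _ hy']

lemma kappaLLY_eq_of_closedNeighborSet_eq (hG : G.Connected) (h : G.Adj x y)
    (hxy : closedNeighborSet G x = closedNeighborSet G y) :
    kappaLLY G x y = 1 + 1 / deg G x := by
  have hdeg : deg G x = deg G y := by
    have hcard := congrArg Set.ncard hxy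
    simpa only [ncard_closedNeighborSet, Nat.add_right_cancel_iff] using hcard
  have hlip (u v : V) : (Pi.single y 1 : V → ℝ) v - (Pi.single y 1 : V → ℝ) u ≤ G.dist u v := by
    rcases eq_or_ne u v with rfl | huv
    · simp
    · have hpos : (1 : ℝ) ≤ G.dist u v := Nat.one_le_cast.2 (hG.pos_dist_of_ne huv)
      refine le_trans ?_ hpos
      simp only [Pi.single_apply]
      split_ifs <;> norm_num
  rw [kappaLLY_eq_lap_sub_lap_of_deg_le h hdeg.le hlip (by simp [h.ne]) (by simp [hxy]),
    lap_single_of_adj h, lap_single_self (deg_pos_of_adj h.symm)]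
  ring

end Curvature

section Antitree

variable {N : ℕ} {a : Fin N → ℕ} {u v x y : Σ k : Fin N, Fin (a k)}

/-- The (zero-based) index of the set `V_k` containing a vertex, as the real potential that is
optimal for transport between consecutive levels. -/
def level (z : Σ k : Fin N, Fin (a k)) : ℝ := (z.1 : ℕ)

lemma antitree_adj_iff : (antitree N a).Adj x y ↔
    x ≠ y ∧ (x.1 : ℕ) ≤ y.1 + 1 ∧ (y.1 : ℕ) ≤ x.1 + 1 := by
  simp only [antitree]
  refine and_congr_right fun _ => ?_
  omega

lemma mem_closedNeighborSet_antitree :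
    y ∈ closedNeighborSet (antitree N a) x ↔ (x.1 : ℕ) ≤ y.1 + 1 ∧ (y.1 : ℕ) ≤ x.1 + 1 := by
  rcases eq_or_ne y x with rfl | hxy
  · simp [closedNeighborSet]
  · simp [closedNeighborSet, antitree_adj_iff, hxy, hxy.symm]

lemma antitree_adj_of_succ (h : (x.1 : ℕ) + 1 = y.1) : (antitree N a).Adj x y := by
  refine ⟨?_, .inr (.inl h)⟩
  rintro rfl
  omega

lemma antitree_adj_of_eq (hxy : x ≠ y) (h : (x.1 : ℕ) = y.1) : (antitree N a).Adj x y :=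
  ⟨hxy, .inl h⟩

lemma exists_walk_antitree_of_lt (ha : ∀ k, 0 < a k) (h : (u.1 : ℕ) < v.1) :
    ∃ w : (antitree N a).Walk u v, w.length + u.1 = v.1 := by
  obtain ⟨n, hn⟩ := Nat.exists_eq_add_of_lt h
  clear h
  induction n generalizing u with
  | zero => exact ⟨(antitree_adj_of_succ hn.symm).toWalk, by simp [hn, add_comm]⟩
  | succ n ih =>
    have hlt : (u.1 : ℕ) + 1 < N := by have := v.1.isLt; omega
    let u' : Σ k : Fin N, Fin (a k) := ⟨⟨u.1 + 1, hlt⟩, ⟨0, ha _⟩⟩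
    have hu' : (u.1 : ℕ) + 1 = u'.1 := rfl
    obtain ⟨w, hw⟩ := ih (u := u') (by omega)
    refine ⟨.cons (antitree_adj_of_succ hu') w, ?_⟩
    rw [SimpleGraph.Walk.length_cons]
    omega

lemma antitree_connected (ha : ∀ k, 0 < a k) (hN : 0 < N) : (antitree N a).Connected := by
  have : Nonempty (Σ k : Fin N, Fin (a k)) := ⟨⟨⟨0, hN⟩, ⟨0, ha _⟩⟩⟩
  refine ⟨fun u v => ?_⟩
  rcases lt_trichotomy (u.1 : ℕ) v.1 with h | h | h
  · exact (exists_walk_antitree_of_lt ha h).nonempty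
  · rcases eq_or_ne u v with rfl | huv
    · rfl
    · exact (antitree_adj_of_eq huv h).reachable
  · exact SimpleGraph.Reachable.symm (exists_walk_antitree_of_lt ha h).nonempty

lemma level_sub_level_le_dist (ha : ∀ k, 0 < a k) (u v : Σ k : Fin N, Fin (a k)) :
    level v - level u ≤ (antitree N a).dist u v := by
  refine sub_le_dist_of_adj (antitree_connected ha u.1.pos) (fun x y h => ?_) u v
  have hle : (y.1 : ℝ) ≤ x.1 + 1 := mod_cast (antitree_adj_iff.1 h).2.2
  exact sub_left_le_of_le_add hle

lemma dist_antitree_of_lt (ha : ∀ k, 0 < a k) (h : (u.1 : ℕ) < v.1) :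
    ((antitree N a).dist u v : ℝ) = level v - level u := by
  refine le_antisymm ?_ (level_sub_level_le_dist ha u v)
  obtain ⟨w, hw⟩ := exists_walk_antitree_of_lt ha h
  have hle : (antitree N a).dist u v + u.1 ≤ v.1 :=
    hw ▸ Nat.add_le_add_right (SimpleGraph.dist_le w) _
  rw [level, level, le_sub_iff_add_le]
  exact_mod_cast hle

lemma diam_antitree (ha : ∀ k, 0 < a k) (hN : 1 < N) : diam (antitree N a) = N - 1 := by
  have dist_le {u v : Σ k : Fin N, Fin (a k)} (h : (u.1 : ℕ) ≤ v.1) :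
      (antitree N a).dist u v ≤ N - 1 := by
    rcases h.lt_or_eq with h | h
    · have hdist := dist_antitree_of_lt ha h
      rw [eq_sub_iff_add_eq, level, level] at hdist
      have hdist' : (antitree N a).dist u v + u.1 = v.1 := mod_cast hdist
      omega
    · rcases eq_or_ne u v with rfl | huv
      · simp
      · rw [SimpleGraph.dist_eq_one_iff_adj.2 (antitree_adj_of_eq huv h)]
        omega
  apply le_antisymm
  · rw [diam, Finset.sup_le_iff]
    rintro ⟨u, v⟩ -
    rcases le_total (u.1 : ℕ) v.1 with h | h
    · exact dist_le h
    · rw [SimpleGraph.dist_comm]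
      exact dist_le h
  · let u : Σ k : Fin N, Fin (a k) := ⟨⟨0, by omega⟩, ⟨0, ha _⟩⟩
    let v : Σ k : Fin N, Fin (a k) := ⟨⟨N - 1, by omega⟩, ⟨0, ha _⟩⟩
    have hle : ((N - 1 : ℕ) : ℝ) ≤ (antitree N a).dist u v := by
      simpa [level, u, v] using level_sub_level_le_dist ha u v
    exact (Nat.cast_le.1 hle).trans
      (le_sup (f := fun uv : (Σ k : Fin N, Fin (a k)) × (Σ k : Fin N, Fin (a k)) =>
        (antitree N a).dist uv.1 uv.2) (mem_univ (u, v)))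

/-- The endpoint of larger degree dictates the transport: upwards, mass arrives only on the level
above `y`; downwards (reverse the levels), only on the level below `x`. -/
theorem kappaLLY_antitree_of_succ (ha : ∀ k, 0 < a k) (h : (x.1 : ℕ) + 1 = y.1) :
    kappaLLY (antitree N a) x y =
      lap (antitree N a) level x - lap (antitree N a) level y := by
  have hadj : (antitree N a).Adj x y := antitree_adj_of_succ h
  have hlevel : level y - level x = 1 := by
    simp [level, ← h]
  rcases le_total (deg (antitree N a) x) (deg (antitree N a) y) with hdeg | hdeg
  · refine kappaLLY_eq_lap_sub_lap_of_deg_le hadj hdeg (level_sub_level_le_dist ha) hlevel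
      fun u hu v hv => (dist_antitree_of_lt ha ?_).le
    rw [Set.mem_sdiff] at hv
    simp only [mem_closedNeighborSet_antitree] at hu hv
    omega
  · have hlip (u v : Σ k : Fin N, Fin (a k)) :
        (-level) v - (-level) u ≤ ((antitree N a).dist u v : ℝ) := by
      rw [Pi.neg_apply, Pi.neg_apply, neg_sub_neg, SimpleGraph.dist_comm]
      exact level_sub_level_le_dist ha v u
    rw [kappaLLY_comm, kappaLLY_eq_lap_sub_lap_of_deg_le hadj.symm hdeg hlip
      (by rwa [Pi.neg_apply, Pi.neg_apply, neg_sub_neg]) ?_, lap_neg, lap_neg, neg_sub_neg]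
    intro u hu v hv
    rw [Set.mem_sdiff] at hv
    simp only [mem_closedNeighborSet_antitree] at hu hv
    rw [Pi.neg_apply, Pi.neg_apply, neg_sub_neg, SimpleGraph.dist_comm]
    exact (dist_antitree_of_lt ha (by omega)).le

lemma one_le_kappaLLY_antitree_of_eq (ha : ∀ k, 0 < a k) (hxy : x ≠ y)
    (h : (x.1 : ℕ) = y.1) : 1 ≤ kappaLLY (antitree N a) x y := by
  have hN : closedNeighborSet (antitree N a) x = closedNeighborSet (antitree N a) y := by
    ext z
    rw [mem_closedNeighborSet_antitree, mem_closedNeighborSet_antitree, h]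
  rw [kappaLLY_eq_of_closedNeighborSet_eq (antitree_connected ha x.1.pos)
    (antitree_adj_of_eq hxy h) hN]
  exact le_add_of_nonneg_right (by positivity)

/-- The indices of the levels that the closed neighbourhood of a vertex of level `i` consists of. -/
def nearLevels (i : Fin N) : Finset (Fin N) := {k | (i : ℕ) ≤ k + 1 ∧ (k : ℕ) ≤ i + 1}

lemma sum_adj_antitree (x : Σ k : Fin N, Fin (a k)) (g : Fin N → ℝ) :
    ∑ z with (antitree N a).Adj x z, g z.1 =
      (∑ k ∈ nearLevels x.1, a k * g k) - g x.1 := by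
  have hterm (z : Σ k : Fin N, Fin (a k)) : (if (antitree N a).Adj x z then g z.1 else 0) =
      (if (x.1 : ℕ) ≤ z.1 + 1 ∧ (z.1 : ℕ) ≤ x.1 + 1 then g z.1 else 0) -
        if z = x then g x.1 else 0 := by
    rcases eq_or_ne z x with rfl | hz
    · simp
    · simp [antitree_adj_iff, hz, hz.symm]
  rw [sum_filter, sum_congr rfl fun z _ => hterm z, sum_sub_distrib, Fintype.sum_sigma,
    nearLevels, sum_filter, sum_ite_eq', if_pos (mem_univ x)]
  congr 1
  refine sum_congr rfl fun k _ => ?_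
  split_ifs <;> simp

lemma deg_antitree (x : Σ k : Fin N, Fin (a k)) : (deg (antitree N a) x : ℝ) =
    (∑ k ∈ nearLevels x.1, (a k : ℝ)) - 1 := by
  simpa [deg] using sum_adj_antitree x fun _ => 1

lemma lap_level_antitree (x : Σ k : Fin N, Fin (a k)) : lap (antitree N a) level x =
    (∑ k ∈ nearLevels x.1, a k * ((k : ℝ) - (x.1 : ℕ))) /
      deg (antitree N a) x := by
  have hsum := sum_adj_antitree x fun k => (k : ℝ) - (x.1 : ℕ)
  rw [sub_self, sub_zero] at hsum
  rw [lap, ← hsum]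
  rfl

end Antitree

section SymmetricalAntitree

variable {b c : ℕ}

lemma symmetrical_pos (hb : 0 < b) (hc : 0 < c) (k : Fin 5) :
    0 < (![1, b, c, b, 1] : Fin 5 → ℕ) k := by
  fin_cases k <;> simp [hb, hc]

lemma sum_nearLevels_five (i : Fin 5) (g : Fin 5 → ℝ) : ∑ k ∈ nearLevels i, g k =
    ![g 0 + g 1, g 0 + g 1 + g 2, g 1 + g 2 + g 3, g 2 + g 3 + g 4, g 3 + g 4] i := by
  fin_cases i <;> simp [nearLevels, sum_filter, Fin.sum_univ_five]

lemma lap_level_antitree_five {a : Fin 5 → ℕ} (x : Σ k : Fin 5, Fin (a k)) :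
    lap (antitree 5 a) level x =
      ![a 1 / (a 0 + a 1 - 1 : ℝ), (a 2 - a 0) / (a 0 + a 1 + a 2 - 1 : ℝ),
        (a 3 - a 1) / (a 1 + a 2 + a 3 - 1 : ℝ), (a 4 - a 2) / (a 2 + a 3 + a 4 - 1 : ℝ),
        -a 3 / (a 3 + a 4 - 1 : ℝ)] x.1 := by
  rw [lap_level_antitree, deg_antitree, sum_nearLevels_five, sum_nearLevels_five]
  obtain ⟨k, i⟩ := x
  fin_cases k <;> simp <;> ring

lemma lap_level_symmetrical (hb : 0 < b) (x : Σ k : Fin 5, Fin (![1, b, c, b, 1] k)) :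
    lap (antitree 5 ![1, b, c, b, 1]) level x =
      ![1, ((c : ℝ) - 1) / (b + c), 0, -(((c : ℝ) - 1) / (b + c)), -1] x.1 := by
  have hb' : (b : ℝ) ≠ 0 := Nat.cast_ne_zero.2 hb.ne'
  have hdeg : (1 + b + c - 1 : ℝ) = b + c := by ring
  rw [lap_level_antitree_five]
  obtain ⟨k, i⟩ := x
  fin_cases k <;> simp [hb', hdeg, ← neg_div, add_comm (c : ℝ) b]

lemma kappaLLY_symmetrical_of_succ (hb : 0 < b) (hc : 0 < c)
    {x y : Σ k : Fin 5, Fin (![1, b, c, b, 1] k)} (h : (x.1 : ℕ) + 1 = y.1) :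
    kappaLLY (antitree 5 ![1, b, c, b, 1]) x y =
      if (x.1 : ℕ) = 0 ∨ (x.1 : ℕ) = 3 then 1 - ((c : ℝ) - 1) / (b + c)
      else ((c : ℝ) - 1) / (b + c) := by
  rw [kappaLLY_antitree_of_succ (symmetrical_pos hb hc) h, lap_level_symmetrical hb,
    lap_level_symmetrical hb]
  obtain ⟨i, _⟩ := x
  obtain ⟨j, _⟩ := y
  fin_cases i <;> fin_cases j <;> simp [neg_add_eq_sub] at h ⊢

theorem isLeast_kappaLLY_symmetrical (hb : 0 < b) (hc : 0 < c) :
    IsLeast {r : ℝ | ∃ x y, (antitree 5 ![1, b, c, b, 1]).Adj x y ∧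
        r = kappaLLY (antitree 5 ![1, b, c, b, 1]) x y}
      (min (1 - ((c : ℝ) - 1) / (b + c)) (((c : ℝ) - 1) / (b + c))) := by
  have ha := symmetrical_pos hb hc
  let vertex (k : Fin 5) : Σ k : Fin 5, Fin (![1, b, c, b, 1] k) := ⟨k, ⟨0, ha k⟩⟩
  constructor
  · rcases min_choice (1 - ((c : ℝ) - 1) / (b + c)) (((c : ℝ) - 1) / (b + c)) with h | h
    · refine ⟨vertex 0, vertex 1, antitree_adj_of_succ rfl, ?_⟩
      rw [h, kappaLLY_symmetrical_of_succ hb hc rfl, if_pos (.inl rfl)]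
    · refine ⟨vertex 1, vertex 2, antitree_adj_of_succ rfl, ?_⟩
      rw [h, kappaLLY_symmetrical_of_succ hb hc rfl, if_neg (by simp [vertex])]
  · have le_of_succ {x y : Σ k : Fin 5, Fin (![1, b, c, b, 1] k)} (h : (x.1 : ℕ) + 1 = y.1) :
        min (1 - ((c : ℝ) - 1) / (b + c)) (((c : ℝ) - 1) / (b + c)) ≤
          kappaLLY (antitree 5 ![1, b, c, b, 1]) x y := by
      rw [kappaLLY_symmetrical_of_succ hb hc h]
      split_ifs
      exacts [min_le_left _ _, min_le_right _ _]
    rintro _ ⟨x, y, ⟨hxy, h | h | h⟩, rfl⟩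
    · have hc' : (1 : ℝ) ≤ c := Nat.one_le_cast.2 hc
      have hle : 1 - ((c : ℝ) - 1) / (b + c) ≤ 1 :=
        sub_le_self _ (div_nonneg (sub_nonneg.2 hc') (by positivity))
      exact (min_le_left _ _).trans (hle.trans (one_le_kappaLLY_antitree_of_eq ha hxy h))
    · exact le_of_succ h
    · rw [kappaLLY_comm]
      exact le_of_succ h

end SymmetricalAntitree

lemma min_one_sub_self_eq_half_iff (t : ℝ) : min (1 - t) t = 1 / 2 ↔ t = 1 / 2 := by
  refine ⟨fun h => le_antisymm ?_ (h ▸ min_le_right _ _), fun h => ?_⟩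
  · linarith [h ▸ min_le_left (1 - t) t]
  · rw [h]
    norm_num

/-- The symmetrical antitree `AT(1,b,c,b,1)` is Bonnet-Myers sharp iff
`c = b + 2`. -/
theorem stmt12 (b c : ℕ) (hb : 0 < b) (hc : 0 < c) :
    BMSharp (antitree 5 ![1, b, c, b, 1]) ↔ c = b + 2 := by
  have hdiam : (2 : ℝ) / diam (antitree 5 ![1, b, c, b, 1]) = 1 / 2 := by
    rw [diam_antitree (symmetrical_pos hb hc) (by norm_num)]
    norm_num
  have hbc : (b + c : ℝ) ≠ 0 := by positivity
  rw [BMSharp, (isLeast_kappaLLY_symmetrical hb hc).csInf_eq, hdiam,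
    min_one_sub_self_eq_half_iff, div_eq_div_iff hbc two_ne_zero]
  constructor
  · intro h
    have hc_eq : (c : ℝ) = b + 2 := by linarith
    exact_mod_cast hc_eq
  · rintro rfl
    push_cast
    ring
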